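/- For every λ > 0 and every θ ∈ ℝ, at least one of the following holds: for all odd k ≥ 1 and all E ∈ ℝ, y_k(E, λ, θ) = x_k(E, λ, 0), or for all even k ≥ 0 and all E ∈ ℝ, y_k(E, λ, θ) = x_k(E, λ, 0). -/

import Mathlib

/-- `ω = (√5 - 1)/2`, the inverse of the golden mean. -/
noncomputable def goldenOmega : ℝ := (Real.sqrt 5 - 1) / 2

/-- The Fibonacci potential: `v_θ(n) = 1` if the fractional part of `nω + θ`
lies in `[1 - ω, 1)`, and `0` otherwise. -/
noncomputable def vTheta (θ : ℝ) (n : ℤ) : ℝ :=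
  if Int.fract ((n : ℝ) * goldenOmega + θ) ∈ Set.Ico (1 - goldenOmega) 1 then 1 else 0

/-- The one-step transfer matrix `T(m, E, λ, θ)` with rows
`(E - λ v_θ(m), -1)` and `(1, 0)`. -/
noncomputable def Tmat (lam θ E : ℝ) (m : ℤ) : Matrix (Fin 2) (Fin 2) ℝ :=
  !![E - lam * vTheta θ m, -1; 1, 0]

/-- The transfer matrix over `[1, n]`:
`M(n, E, λ, θ) = T(n, E, λ, θ) ⋯ T(1, E, λ, θ)` (with `M(0) = 1`). -/
noncomputable def Mmat (lam θ E : ℝ) : ℕ → Matrix (Fin 2) (Fin 2) ℝ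
  | 0 => 1
  | n + 1 => Tmat lam θ E ((n : ℤ) + 1) * Mmat lam θ E n

/-- The trace `x_k(E, λ, θ) = tr M(F_k, E, λ, θ)`, where `F_k = Nat.fib (k + 2)`
(the paper's Fibonacci numbers `F_{-1} = F_0 = 1`, `F_k = F_{k-1} + F_{k-2}`). -/
noncomputable def xTrace (lam θ : ℝ) (k : ℕ) (E : ℝ) : ℝ :=
  Matrix.trace (Mmat lam θ E (Nat.fib (k + 2)))

/-- The transfer matrix over the left half-line:
`M(-n, E, λ, θ) = T(-n+1, E, λ, θ)⁻¹ ⋯ T(0, E, λ, θ)⁻¹` for `n ≥ 1` (with `M(-0) = 1`);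
here `Mneg lam θ E n` is `M(-n, E, λ, θ)`. -/
noncomputable def Mneg (lam θ E : ℝ) : ℕ → Matrix (Fin 2) (Fin 2) ℝ
  | 0 => 1
  | n + 1 => (Tmat lam θ E (-(n : ℤ)))⁻¹ * Mneg lam θ E n

/-- The trace `y_k(E, λ, θ) = tr M(-F_k, E, λ, θ)`, where `F_k = Nat.fib (k + 2)`. -/
noncomputable def yTrace (lam θ : ℝ) (k : ℕ) (E : ℝ) : ℝ :=
  Matrix.trace (Mneg lam θ E (Nat.fib (k + 2)))

/-- Ordered product `f (a+n-1) * ... * f a`. -/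
noncomputable def winProd (f : ℤ → Matrix (Fin 2) (Fin 2) ℝ) (a : ℤ) : ℕ → Matrix (Fin 2) (Fin 2) ℝ
  | 0 => 1
  | n + 1 => f (a + n) * winProd f a n

theorem winProd_succ' (f : ℤ → Matrix (Fin 2) (Fin 2) ℝ) (a : ℤ) (n : ℕ) :
    winProd f a (n + 1) = winProd f (a + 1) n * f a := by
  induction n with
  | zero => simp [winProd]
  | succ n ih =>
    rw [winProd, ih, winProd, ← mul_assoc]
    congr 3
    push_cast; ring

theorem winProd_congr (f g : ℤ → Matrix (Fin 2) (Fin 2) ℝ) (a b : ℤ) (n : ℕ)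
    (h : ∀ m : ℕ, m < n → f (a + m) = g (b + m)) : winProd f a n = winProd g b n := by
  induction n with
  | zero => simp [winProd]
  | succ n ih =>
    rw [winProd, winProd, h n (by omega), ih (fun m hm => h m (by omega))]

theorem winProd_shift (f : ℤ → Matrix (Fin 2) (Fin 2) ℝ) (q : ℕ) (hq : 0 < q)
    (hf : ∀ i, f (i + q) = f i) (a : ℤ) :
    (winProd f (a + 1) q).trace = (winProd f a q).trace := by
  obtain ⟨r, rfl⟩ : ∃ r, q = r + 1 := ⟨q - 1, by omega⟩
  rw [winProd_succ' f a, winProd, Matrix.trace_mul_comm]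
  congr 2
  rw [← hf a]
  congr 1
  push_cast; ring

theorem winProd_shift_all (f : ℤ → Matrix (Fin 2) (Fin 2) ℝ) (q : ℕ) (hq : 0 < q)
    (hf : ∀ i, f (i + q) = f i) (a : ℤ) :
    (winProd f a q).trace = (winProd f 0 q).trace := by
  induction a using Int.induction_on with
  | zero => rfl
  | succ i ih => rw [winProd_shift f q hq hf, ih]
  | pred i ih =>
    rw [← ih, ← winProd_shift f q hq hf (-(i : ℤ) - 1)]
    congr 2
    ring

/-- One-step matrix with an integer letter. -/
noncomputable def letterMat (lam E : ℝ) (c : ℤ) : Matrix (Fin 2) (Fin 2) ℝ :=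
  !![E - lam * (c : ℝ), -1; 1, 0]

theorem omega_sq : goldenOmega ^ 2 = 1 - goldenOmega := by
  have h : Real.sqrt 5 ^ 2 = 5 := Real.sq_sqrt (by norm_num)
  unfold goldenOmega
  nlinarith

theorem omega_bounds : 0.6 < goldenOmega ∧ goldenOmega < 0.62 := by
  have h : Real.sqrt 5 ^ 2 = 5 := Real.sq_sqrt (by norm_num)
  have h0 := Real.sqrt_nonneg 5
  unfold goldenOmega
  constructor <;> nlinarith

theorem vTheta_eq (θ : ℝ) (n : ℤ) :
    vTheta θ n = ((⌊((n : ℝ) + 1) * goldenOmega + θ⌋ - ⌊(n : ℝ) * goldenOmega + θ⌋ : ℤ) : ℝ) := by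
  obtain ⟨h1, h2⟩ := omega_bounds
  have e : ((n : ℝ) + 1) * goldenOmega + θ = ((n : ℝ) * goldenOmega + θ) + goldenOmega := by ring
  rw [e]
  unfold vTheta
  generalize (n : ℝ) * goldenOmega + θ = x
  have h3 := Int.fract_add_floor x
  have h4 := Int.fract_nonneg x
  have h5 := Int.fract_lt_one x
  split_ifs with h
  · have : ⌊x + goldenOmega⌋ = ⌊x⌋ + 1 := by
      rw [Int.floor_eq_iff]; push_cast
      constructor <;> linarith [h.1]
    rw [this]; simp
  · have h6 : Int.fract x < 1 - goldenOmega := by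
      by_contra hh
      exact h ⟨not_lt.1 hh, h5⟩
    have : ⌊x + goldenOmega⌋ = ⌊x⌋ := by
      rw [Int.floor_eq_iff]
      constructor <;> linarith
    rw [this]; simp

theorem Tmat_eq (lam θ E : ℝ) (n : ℤ) : Tmat lam θ E n =
    letterMat lam E (⌊((n : ℝ) + 1) * goldenOmega + θ⌋ - ⌊(n : ℝ) * goldenOmega + θ⌋) := by
  rw [Tmat, letterMat, vTheta_eq]

theorem Mmat_eq (lam θ E : ℝ) (n : ℕ) : Mmat lam θ E n = winProd (Tmat lam θ E) 1 n := by
  induction n with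
  | zero => rfl
  | succ n ih => rw [Mmat, winProd, ih, add_comm]

theorem Mneg_eq (lam θ E : ℝ) (n : ℕ) :
    Mneg lam θ E n = (winProd (Tmat lam θ E) (1 - n) n)⁻¹ := by
  induction n with
  | zero => simp [Mneg, winProd]
  | succ n ih =>
    rw [Mneg, winProd_succ', Matrix.mul_inv_rev, ih]
    have e1 : (1 : ℤ) - ((n + 1 : ℕ) : ℤ) = -n := by push_cast; ring
    have e2 : -(n : ℤ) + 1 = 1 - n := by ring
    rw [e1, e2]

theorem winProd_det (lam θ E : ℝ) (a : ℤ) (n : ℕ) : (winProd (Tmat lam θ E) a n).det = 1 := by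
  induction n with
  | zero => simp [winProd]
  | succ n ih => rw [winProd, Matrix.det_mul, ih]; simp [Tmat, Matrix.det_fin_two]

theorem trace_inv_of_det (A : Matrix (Fin 2) (Fin 2) ℝ) (h : A.det = 1) :
    (A⁻¹).trace = A.trace := by
  rw [Matrix.inv_def, h, Matrix.adjugate_fin_two]
  simp [Matrix.trace_fin_two, add_comm]

/-- `F_k ω - F_{k-1}`. -/
theorem fib_omega (k : ℕ) : (Nat.fib (k + 2) : ℝ) * goldenOmega - Nat.fib (k + 1)
    = -(-1) ^ k * goldenOmega ^ (k + 2) := by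
  have key := omega_sq
  have : ∀ k : ℕ, ((Nat.fib (k + 2) : ℝ) * goldenOmega - Nat.fib (k + 1)
      = -(-1) ^ k * goldenOmega ^ (k + 2)) ∧ ((Nat.fib (k + 3) : ℝ) * goldenOmega - Nat.fib (k + 2)
      = -(-1) ^ (k + 1) * goldenOmega ^ (k + 3)) := by
    intro k
    induction k with
    | zero =>
      norm_num [Nat.fib_add_two]
      constructor
      · linarith
      · have : goldenOmega ^ 3 = goldenOmega * goldenOmega ^ 2 := by ring
        rw [this, key]; nlinarith
    | succ k ih =>
      obtain ⟨i1, i2⟩ := ih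
      refine ⟨i2, ?_⟩
      have f1 : Nat.fib (k + 1 + 3) = Nat.fib (k + 2) + Nat.fib (k + 3) := Nat.fib_add_two
      have f2 : Nat.fib (k + 1 + 2) = Nat.fib (k + 1) + Nat.fib (k + 2) := Nat.fib_add_two
      have e : goldenOmega ^ (k + 1 + 3) = goldenOmega ^ (k + 2) * goldenOmega ^ 2 := by ring
      have e3 : goldenOmega ^ (k + 3) = goldenOmega ^ (k + 2) * goldenOmega := by ring
      rw [f1, f2, e, key]
      rw [e3] at i2
      push_cast
      have s1 : (-1 : ℝ) ^ (k + 1) = - (-1) ^ k := by ring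
      have s2 : (-1 : ℝ) ^ (k + 1 + 1) = (-1) ^ k := by ring
      rw [s1] at i2
      rw [s2]
      have f3 : (Nat.fib (k + 3) : ℝ) = Nat.fib (k + 1) + Nat.fib (k + 2) := by exact_mod_cast f2
      linear_combination i1 + i2 - goldenOmega * f3
  exact (this k).1

theorem fib_pow_le (k : ℕ) : (Nat.fib (k + 2) : ℝ) * goldenOmega ^ (k + 1) ≤ 1 := by
  have key := omega_sq
  obtain ⟨h1, h2⟩ := omega_bounds
  have : ∀ k : ℕ, ((Nat.fib (k + 2) : ℝ) * goldenOmega ^ (k + 1) ≤ 1) ∧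
      ((Nat.fib (k + 3) : ℝ) * goldenOmega ^ (k + 2) ≤ 1) := by
    intro k
    induction k with
    | zero =>
      norm_num [Nat.fib_add_two]
      constructor
      · linarith
      · rw [key]; linarith
    | succ k ih =>
      obtain ⟨i1, i2⟩ := ih
      refine ⟨i2, ?_⟩
      have f1 : Nat.fib (k + 1 + 3) = Nat.fib (k + 2) + Nat.fib (k + 3) := Nat.fib_add_two
      rw [f1]
      push_cast
      calc ((Nat.fib (k + 2) : ℝ) + Nat.fib (k + 3)) * goldenOmega ^ (k + 1 + 2)
          = (Nat.fib (k + 2) * goldenOmega ^ (k + 1)) * goldenOmega ^ 2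
            + (Nat.fib (k + 3) * goldenOmega ^ (k + 2)) * goldenOmega := by ring
        _ ≤ 1 * goldenOmega ^ 2 + 1 * goldenOmega := by gcongr
        _ = 1 := by rw [key]; ring
  exact (this k).1

theorem fib_approx (k : ℕ) : (Nat.fib (k + 2) : ℝ) *
    |(Nat.fib (k + 2) : ℝ) * goldenOmega - Nat.fib (k + 1)| < 1 := by
  obtain ⟨h1, h2⟩ := omega_bounds
  have hp : 0 < goldenOmega ^ (k + 2) := pow_pos (by linarith) _
  rw [fib_omega, abs_mul, abs_neg, abs_pow, abs_neg, abs_one, one_pow, one_mul, abs_of_pos hp]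
  have := fib_pow_le k
  have e : (Nat.fib (k + 2) : ℝ) * goldenOmega ^ (k + 2)
    = (Nat.fib (k + 2) * goldenOmega ^ (k + 1)) * goldenOmega := by ring
  rw [e]
  nlinarith

/-- No integer multiple of `1/q` obstruction: the balance estimate. -/
theorem balance (p q : ℕ) (hq : 0 < q) (hpq : Nat.Coprime p q) (w t : ℝ)
    (hw : (q : ℝ) * |(q : ℝ) * w - p| < 1) (m l : ℕ) (hm : m < q) (hl : l < q) :
    (q : ℤ) * ⌊(m : ℝ) * w + t⌋ - m * p < q * ⌊(l : ℝ) * w + t⌋ - l * p + q := by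
  by_contra hcon
  push Not at hcon
  set a := ⌊(m : ℝ) * w + t⌋ with ha
  set b := ⌊(l : ℝ) * w + t⌋ with hb
  have a1 : (a : ℝ) ≤ (m : ℝ) * w + t := Int.floor_le _
  have b1 : (l : ℝ) * w + t < b + 1 := Int.lt_floor_add_one _
  have hqR : (0 : ℝ) < q := by exact_mod_cast hq
  -- z = q (a - b - 1) - (m - l) p ≥ 0
  have hz : 0 ≤ (q : ℤ) * (a - b - 1) - ((m : ℤ) - l) * p := by linarith
  have hab : ((a : ℝ) - b - 1) < ((m : ℝ) - l) * w := by linarith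
  have hlt : (q : ℝ) * ((a : ℝ) - b - 1) - ((m : ℝ) - l) * p < ((m : ℝ) - l) * (q * w - p) := by
    nlinarith
  have hd : |(m : ℝ) - l| ≤ q := by
    have : (m : ℝ) < q := by exact_mod_cast hm
    have : (l : ℝ) < q := by exact_mod_cast hl
    have : (0 : ℝ) ≤ m := by positivity
    have : (0 : ℝ) ≤ l := by positivity
    rw [abs_le]; constructor <;> linarith
  have hle : ((m : ℝ) - l) * (q * w - p) < 1 := by
    calc _ ≤ |((m : ℝ) - l) * (q * w - p)| := le_abs_self _
      _ = |(m : ℝ) - l| * |q * w - p| := abs_mul _ _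
      _ ≤ q * |q * w - p| := by gcongr
      _ < 1 := hw
  have hz2 : (q : ℤ) * (a - b - 1) - ((m : ℤ) - l) * p < 1 := by
    have : (((q : ℤ) * (a - b - 1) - ((m : ℤ) - l) * p : ℤ) : ℝ) < ((1 : ℤ) : ℝ) := by
      push_cast; linarith
    exact_mod_cast this
  have hz3 : (q : ℤ) * (a - b - 1) = ((m : ℤ) - l) * p := by omega
  have hdvd : (q : ℤ) ∣ ((m : ℤ) - l) := by
    have hc : IsCoprime (q : ℤ) (p : ℤ) := Nat.isCoprime_iff_coprime.2 hpq.symm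
    exact hc.dvd_of_dvd_mul_right ⟨_, hz3.symm⟩
  have hml : (m : ℤ) - l = 0 := by
    apply Int.eq_zero_of_abs_lt_dvd hdvd
    rw [abs_lt]; constructor <;> omega
  have hml' : m = l := by omega
  subst hml'
  have : (a : ℝ) = b := by rw [ha, hb]
  have h9 : a = b := by exact_mod_cast this
  rw [h9] at hz
  simp at hz
  omega

/-- The periodic letter. -/
def perLetter (p q : ℕ) (i : ℤ) : ℤ := (i + p) / q - i / q

theorem perLetter_add (p q : ℕ) (hq : 0 < q) (i c : ℤ) :
    perLetter p q (i + c * q) = perLetter p q i := by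
  have h : (q : ℤ) ≠ 0 := by omega
  unfold perLetter
  rw [show i + c * q + p = (i + p) + c * q by ring, Int.add_mul_ediv_right _ _ h,
    Int.add_mul_ediv_right _ _ h]
  ring

theorem trace_window (lam E w t : ℝ) (p q : ℕ) (hq : 0 < q) (hpq : Nat.Coprime p q)
    (hw : (q : ℝ) * |(q : ℝ) * w - p| < 1) (hc : ⌊(q : ℝ) * w + t⌋ = ⌊t⌋ + p)
    (f : ℤ → Matrix (Fin 2) (Fin 2) ℝ) (s : ℤ)
    (hf : ∀ m : ℕ, m < q →
      f (s + m) = letterMat lam E (⌊((m : ℝ) + 1) * w + t⌋ - ⌊(m : ℝ) * w + t⌋)) :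
    (winProd f s q).trace =
      (winProd (fun i => letterMat lam E (perLetter p q (i * p))) 0 q).trace := by
  obtain ⟨m0, hm0, hmax⟩ := Finset.exists_max_image (Finset.range q)
    (fun m : ℕ => (q : ℤ) * ⌊(m : ℝ) * w + t⌋ - m * p) ⟨0, by simpa using hq⟩
  set j : ℤ := (q : ℤ) * ⌊(m0 : ℝ) * w + t⌋ - m0 * p with hj
  have hqz : (0 : ℤ) < q := by exact_mod_cast hq
  have hfl : ∀ m : ℕ, m < q → ((m : ℤ) * p + j) / q = ⌊(m : ℝ) * w + t⌋ := by
    intro m hm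
    have h1 := hmax m (by simpa using hm)
    have h2 := balance p q hq hpq w t hw m0 m (by simpa using hm0) hm
    rw [Int.ediv_eq_iff_of_pos hqz]
    constructor <;> nlinarith
  have hfl' : ∀ m : ℕ, m ≤ q → ((m : ℤ) * p + j) / q = ⌊(m : ℝ) * w + t⌋ := by
    intro m hm
    rcases hm.lt_or_eq with h | h
    · exact hfl m h
    · subst h
      have h0 := hfl 0 hq
      simp only [Nat.cast_zero, zero_mul, zero_add] at h0
      rw [hc, ← h0, add_comm, mul_comm, Int.add_mul_ediv_right _ _ hqz.ne']
  obtain ⟨x, y, hxy⟩ : IsCoprime (p : ℤ) (q : ℤ) := Nat.isCoprime_iff_coprime.2 hpq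
  rw [← winProd_shift_all (fun i => letterMat lam E (perLetter p q (i * p))) q hq _ (j * x)]
  · congr 1
    apply winProd_congr
    intro m hm
    rw [hf m hm]
    congr 1
    have e : (j * x + m) * p = ((m : ℤ) * p + j) + (-(j * y)) * q := by
      linear_combination j * hxy
    rw [e, perLetter_add p q hq, perLetter, hfl m hm]
    have h3 := hfl' (m + 1) hm
    push_cast at h3
    rw [← h3]
    congr 2
    ring
  · intro i
    show letterMat lam E (perLetter p q ((i + q) * p)) = _
    rw [show (i + (q : ℤ)) * p = i * p + p * q by ring, perLetter_add p q hq]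

theorem fib_cop (k : ℕ) : Nat.Coprime (Nat.fib (k + 1)) (Nat.fib (k + 2)) :=
  Nat.fib_coprime_fib_succ (k + 1)

theorem xTrace_eq (lam E : ℝ) (k : ℕ) : xTrace lam 0 k E =
    (winProd (fun i => letterMat lam E (perLetter (Nat.fib (k + 1)) (Nat.fib (k + 2))
      (i * Nat.fib (k + 1)))) 0 (Nat.fib (k + 2))).trace := by
  rw [xTrace, Mmat_eq]
  obtain ⟨h1, h2⟩ := omega_bounds
  refine trace_window lam E goldenOmega goldenOmega _ _ (Nat.fib_pos.2 (by omega)) (fib_cop k)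
    (fib_approx k) ?_ _ _ ?_
  · have h3 := fib_omega k
    have h4 : goldenOmega ^ (k + 2) ≤ goldenOmega ^ 2 :=
      pow_le_pow_of_le_one (by linarith) (by linarith) (by omega)
    have h5 : 0 < goldenOmega ^ (k + 2) := pow_pos (by linarith) _
    have h6 := omega_sq
    have hf : ⌊goldenOmega⌋ = 0 := by
      rw [Int.floor_eq_iff]; push_cast; constructor <;> linarith
    rw [hf, Int.floor_eq_iff]
    push_cast
    rcases neg_one_pow_eq_or ℝ k with hs | hs <;> rw [hs] at h3 <;> constructor <;> try linarith
    -- odd case, upper bound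
    have hk : 1 ≤ k := by
      rcases Nat.eq_zero_or_pos k with h | h
      · subst h; norm_num at hs
      · exact h
    have h7 : goldenOmega ^ (k + 2) ≤ goldenOmega ^ 3 :=
      pow_le_pow_of_le_one (by linarith) (by linarith) (by omega)
    have h8 : goldenOmega ^ 3 = goldenOmega * (1 - goldenOmega) := by rw [← h6]; ring
    nlinarith
  · intro m hm
    rw [Tmat_eq]
    congr 3 <;> push_cast <;> ring

theorem yTrace_eq (lam θ E : ℝ) (k : ℕ)
    (hc : ⌊θ + goldenOmega⌋ =
      ⌊θ + goldenOmega + (-1) ^ k * goldenOmega ^ (k + 2)⌋) :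
    yTrace lam θ k E = xTrace lam 0 k E := by
  rw [xTrace_eq, yTrace, Mneg_eq, trace_inv_of_det _ (winProd_det _ _ _ _ _)]
  have h3 := fib_omega k
  refine trace_window lam E goldenOmega (θ + (1 - Nat.fib (k + 2)) * goldenOmega) _ _
    (Nat.fib_pos.2 (by omega)) (fib_cop k) (fib_approx k) ?_ _ _ ?_
  · have e1 : (Nat.fib (k + 2) : ℝ) * goldenOmega + (θ + (1 - Nat.fib (k + 2)) * goldenOmega)
      = θ + goldenOmega := by ring
    have e2 : θ + (1 - (Nat.fib (k + 2) : ℝ)) * goldenOmega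
      = θ + goldenOmega + (-1) ^ k * goldenOmega ^ (k + 2) - (Nat.fib (k + 1) : ℕ) := by
      linear_combination -h3
    rw [e1, e2, Int.floor_sub_natCast, hc]
    ring
  · intro m hm
    rw [Tmat_eq]
    congr 3 <;> push_cast <;> ring

/-- For every `λ > 0` and every `θ`, either for all odd `k ≥ 1` and all `E ∈ ℝ` we have
`y_k(E, λ, θ) = x_k(E, λ, 0)`, or for all even `k ≥ 0` and all `E ∈ ℝ` we have
`y_k(E, λ, θ) = x_k(E, λ, 0)`. -/
theorem yTrace_phase_invariance (lam : ℝ) (hlam : 0 < lam) (θ : ℝ) :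
    (∀ k, Odd k → ∀ E : ℝ, yTrace lam θ k E = xTrace lam 0 k E) ∨
    (∀ k, Even k → ∀ E : ℝ, yTrace lam θ k E = xTrace lam 0 k E) := by
  obtain ⟨h1, h2⟩ := omega_bounds
  have h6 := omega_sq
  have f1 := Int.fract_add_floor θ
  have f2 := Int.fract_nonneg θ
  have f3 := Int.fract_lt_one θ
  have hpow : ∀ k : ℕ, 0 < goldenOmega ^ (k + 2) ∧ goldenOmega ^ (k + 2) ≤ goldenOmega ^ 2 :=
    fun k => ⟨pow_pos (by linarith) _,
      pow_le_pow_of_le_one (by linarith) (by linarith) (by omega)⟩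
  by_cases h : Int.fract θ < 1 - goldenOmega
  · left
    intro k hk E
    apply yTrace_eq
    obtain ⟨g1, g2⟩ := hpow k
    rw [hk.neg_one_pow]
    have a1 : ⌊θ + goldenOmega⌋ = ⌊θ⌋ := by
      rw [Int.floor_eq_iff]; constructor <;> linarith
    rw [a1, eq_comm, Int.floor_eq_iff]; constructor <;> linarith
  · right
    push Not at h
    intro k hk E
    apply yTrace_eq
    obtain ⟨g1, g2⟩ := hpow k
    rw [hk.neg_one_pow]
    have a1 : ⌊θ + goldenOmega⌋ = ⌊θ⌋ + 1 := by
      rw [Int.floor_eq_iff]; push_cast; constructor <;> linarith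
    rw [a1, eq_comm, Int.floor_eq_iff]; push_cast; constructor <;> linarith
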